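/- Let p be an odd prime, e : ℕ → ℕ → ℕ the recursively defined dimension sequence, and N : ℕ → ℕ → ℕ the recursively defined label-count sequence (see context). Then for every n ∈ ℕ and every l ∈ ℕ there exists d ∈ ℕ with e d n ≥ N n l. -/

import Mathlib

/-- For an odd prime `p`, the recursively defined dimensions
`e p d m = dim Ext^m(Δ(0), Δ(2d))` over `SL₂` in characteristic `p`:
`e 0 0 = 1`, `e 0 m = 0` for `m ≥ 1`; `e d m = 0` if `d > 0` is not of the form
`kp` or `kp − 1` with `k ≥ 1`; and for `k ≥ 1`:
`e (kp) m = (if m ≥ 1 then e (kp−1) (m−1) else 0)` and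
`e (kp−1) m = (if m ≥ 1 then e ((k−1)p) (m−1) else 0) + e (k−1) m`. -/
def e (p : ℕ) : ℕ → ℕ → ℕ
  | 0, 0 => 1
  | 0, _ + 1 => 0
  | d + 1, m =>
    if h1 : (d + 1) % p = 0 then
      match m with
      | 0 => 0
      | m' + 1 => e p d m'
    else if h2 : (d + 2) % p = 0 then
      (match m with
       | 0 => 0
       | m' + 1 => e p (d + 2 - p) m') + e p ((d + 2) / p - 1) m
    else 0
termination_by d m => d
decreasing_by
  · omega
  · have hp : 2 ≤ p := by
      by_contra hlt
      push_neg at hlt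
      interval_cases p
      · simp at h2
      · omega
    omega
  · have hp : 2 ≤ p := by
      by_contra hlt
      push_neg at hlt
      interval_cases p
      · simp at h2
      · omega
    have h3 : (d + 2) / p ≤ (d + 2) / 2 := Nat.div_le_div_left hp (by omega)
    omega

/-- The number `N n l` of labels of length `l` in the expression for `s·hₙ(s)`:
`N 0 l = 1` iff `l = 1`; `N 1 l = 1` iff `l ∈ {1, 2}`; `N (n+2) 0 = 0` and
`N (n+2) (l+1) = N (n+1) l + N n l`. -/
def Nlab : ℕ → ℕ → ℕ
  | 0, l => if l = 1 then 1 else 0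
  | 1, l => if l = 1 ∨ l = 2 then 1 else 0
  | n + 2, 0 => 0
  | n + 2, l + 1 => Nlab (n + 1) l + Nlab n l

/-!
Write `k = 1 + p + ⋯ + p ^ l` and `E l m = e p (k * p - 1) m`. Passing from `l` to `l + 1` replaces
`k` by `k * p + 1`, so unfolding the recursion gives
`E (l + 1) (m + 2) = e p (k * p * p) (m + 1) + e p (k * p) (m + 2)
  = e p (k * p * p - 1) m + E l (m + 1) ≥ E l m + E l (m + 1)`,
the last step because `e p (k * p - 1) m` is one of the summands of `e p (k * p * p - 1) m`.
So `E` grows at least as fast as the recursion of `Nlab` demands, and a single weight serves all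
degrees.
-/

open Finset

section Recursion

variable {p : ℕ}

theorem e_succ_of_dvd {d : ℕ} (hd : d ≠ 0) (hpd : p ∣ d) (m : ℕ) :
    e p d (m + 1) = e p (d - 1) m := by
  obtain ⟨c, rfl⟩ := Nat.exists_eq_succ_of_ne_zero hd
  rw [e, dif_pos (Nat.mod_eq_zero_of_dvd hpd), Nat.succ_sub_one]

theorem e_succ_mul_sub_one (hp : 1 < p) (k m : ℕ) :
    e p ((k + 1) * p - 1) m =
      (if m = 0 then 0 else e p (k * p) (m - 1)) + e p k m := by
  obtain ⟨c, hc⟩ : ∃ c, (k + 1) * p = c + 2 :=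
    Nat.exists_eq_add_of_le' (hp.trans_le (Nat.le_mul_of_pos_left p k.succ_pos))
  have hdvd : p ∣ c + 2 := hc ▸ dvd_mul_left p (k + 1)
  have hndvd : ¬ p ∣ c + 1 := fun h ↦
    hp.ne' (Nat.dvd_one.mp ((Nat.dvd_add_right h).mp hdvd))
  have hquot : (c + 2) / p - 1 = k := by
    rw [← hc, Nat.mul_div_cancel _ (by lia), Nat.add_sub_cancel]
  have hsub : c + 2 - p = k * p := by rw [← hc, Nat.succ_mul, Nat.add_sub_cancel]
  have hmod : (c + 2) % p = 0 := Nat.mod_eq_zero_of_dvd hdvd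
  have hnmod : ¬ (c + 1) % p = 0 := mt Nat.dvd_of_mod_eq_zero hndvd
  rw [hc, Nat.add_succ_sub_one, e.eq_def]
  cases m <;> simp [hmod, hnmod, hquot, hsub]

theorem e_le_e_succ_mul_sub_one (hp : 1 < p) (k m : ℕ) :
    e p k m ≤ e p ((k + 1) * p - 1) m := by
  rw [e_succ_mul_sub_one hp]
  exact Nat.le_add_left _ _

theorem e_mul_sub_one_le (hp : 1 < p) {k : ℕ} (hk : k ≠ 0) (m : ℕ) :
    e p (k * p - 1) m ≤ e p ((k * p + 1) * p - 1) (m + 1) := by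
  rw [← e_succ_of_dvd (by positivity) (dvd_mul_left p k)]
  exact e_le_e_succ_mul_sub_one hp (k * p) (m + 1)

theorem e_mul_sub_one_add_le (hp : 1 < p) {k : ℕ} (hk : k ≠ 0) (m : ℕ) :
    e p (k * p - 1) (m + 1) + e p (k * p - 1) m ≤ e p ((k * p + 1) * p - 1) (m + 2) := by
  have hkp : k * p ≠ 0 := by positivity
  have hle : e p (k * p - 1) m ≤ e p (k * p * p - 1) m := by
    simpa only [Nat.sub_one_add_one hkp] using e_le_e_succ_mul_sub_one hp (k * p - 1) m
  calc e p (k * p - 1) (m + 1) + e p (k * p - 1) m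
      ≤ e p (k * p - 1) (m + 1) + e p (k * p * p - 1) m := by gcongr
    _ = e p (k * p) (m + 2) + e p (k * p * p) (m + 1) := by
        rw [e_succ_of_dvd hkp (dvd_mul_left p k),
          e_succ_of_dvd (by positivity) (dvd_mul_left p (k * p))]
    _ = e p ((k * p + 1) * p - 1) (m + 2) := by
        rw [e_succ_mul_sub_one hp, if_neg (by lia), Nat.add_succ_sub_one, add_comm]

end Recursion

theorem Nlab_zero_right (n : ℕ) : Nlab n 0 = 0 := by
  rcases n with _ | _ | _ <;> simp [Nlab]

theorem Nlab_one_le_e_sub_one {p : ℕ} (hp : 1 < p) (n : ℕ) : Nlab n 1 ≤ e p (p - 1) n := by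
  have hrec := e_succ_mul_sub_one hp 0 n
  rw [zero_add, one_mul, zero_mul] at hrec
  rcases n with _ | _ | _
  · simp [hrec, Nlab, e]
  · simp [hrec, Nlab, e]
  · simp [Nlab, Nlab_zero_right]

theorem Nlab_succ_le_e_geom_sum {p : ℕ} (hp : 1 < p) (n l : ℕ) :
    Nlab n (l + 1) ≤ e p ((∑ i ∈ range (l + 1), p ^ i) * p - 1) n := by
  induction l generalizing n with
  | zero => simpa using Nlab_one_le_e_sub_one hp n
  | succ l ih =>
    have hk : ∑ i ∈ range (l + 1), p ^ i ≠ 0 := (geom_sum_pos p.zero_le l.succ_ne_zero).ne'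
    rw [geom_sum_succ, mul_comm p]
    rcases n with _ | _ | n
    · simp [Nlab]
    · calc Nlab 1 (l + 2) ≤ Nlab 0 (l + 1) := by simp [Nlab]
        _ ≤ _ := ih 0
        _ ≤ _ := e_mul_sub_one_le hp hk 0
    · calc Nlab (n + 2) (l + 2) = Nlab (n + 1) (l + 1) + Nlab n (l + 1) := by rw [Nlab]
        _ ≤ _ := Nat.add_le_add (ih (n + 1)) (ih n)
        _ ≤ _ := e_mul_sub_one_add_le hp hk n

theorem exists_weight_dim_ge_label_count_general {p : ℕ} (hp : 1 < p) (l : ℕ) :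
    ∃ d : ℕ, ∀ n : ℕ, Nlab n l ≤ e p d n := by
  cases l with
  | zero => exact ⟨0, fun n ↦ by simp [Nlab_zero_right]⟩
  | succ l => exact ⟨_, fun n ↦ Nlab_succ_le_e_geom_sum hp n l⟩

/-- For an odd prime `p`, every `n` and every length `l`, there is a weight `2d`
with `dim Ext^n(Δ(0), Δ(2d)) = e p d n` at least the number `N n l` of labels of
length `l`. -/
theorem exists_weight_dim_ge_label_count (p : ℕ) (hp : p.Prime) (hodd : Odd p)
    (n l : ℕ) : ∃ d : ℕ, Nlab n l ≤ e p d n := by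
  obtain ⟨d, hd⟩ := exists_weight_dim_ge_label_count_general hp.one_lt l
  exact ⟨d, hd n⟩
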